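/- Fix κ ∈ ℝ. For a nonzero lattice point l = (l1,l2) ∈ ℕ₀² define λ_l = arctan(l2/l1) if l1 > 0 and λ_l = π/2 if l1 = 0, and for R > 0 let N(R) = #{ l ∈ ℕ₀², l ≠ (0,0), ‖l‖ ≤ R }. Then lim_{R→∞} (1/N(R)) · Σ_{l ∈ ℕ₀², 0 < ‖l‖ ≤ R} ( 4·cos(2λ_l)·cos(2κ) − cos(4λ_l)·cos(4κ) ) = 0. -/

import Mathlib

/-- Angle of a lattice point with the positive horizontal axis:
λ_l = arctan(l2/l1) if l1 > 0, and π/2 if l1 = 0. -/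
noncomputable def lamAngle (l : ℕ × ℕ) : ℝ :=
  if l.1 = 0 then Real.pi / 2 else Real.arctan ((l.2 : ℝ) / (l.1 : ℝ))

/-- The nonzero lattice points of the quarter disk of radius R. -/
def quarterDisk (R : ℕ) : Finset (ℕ × ℕ) :=
  (Finset.range (R + 1) ×ˢ Finset.range (R + 1)).filter
    (fun l => 0 < l.1 ^ 2 + l.2 ^ 2 ∧ l.1 ^ 2 + l.2 ^ 2 ≤ R ^ 2)

/-!
The angles of the nonzero lattice points in a large quarter disk are equidistributed in `[0, π/2]`.
Scaling by `1 / R` turns a sum of `g (lamAngle l)` into a Riemann sum of `z ↦ g (arg z)` over the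
unit quarter disk. This function has no limit at the origin, but it is bounded, and continuous in
the interior of the disk, which is enough for the Riemann sums to converge to its integral; polar
coordinates reduce that integral to `1/2 * ∫ θ in 0..π/2, g θ`. The functions `cos (2θ)` and
`cos (4θ)` have mean zero over `[0, π/2]`.
-/

open Set Filter Topology MeasureTheory
open scoped Real Pointwise

/-! ### Riemann sums over lattice points -/

section RiemannSums

open BoxIntegral unitPartition

theorem tendsto_integralSum_unitPartition {ι E F : Type*} [Fintype ι] [NormedAddCommGroup E]
    [NormedSpace ℝ E] [NormedAddCommGroup F] [NormedSpace ℝ F] {B : Box ι}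
    (hB : hasIntegralVertices B) {f : (ι → ℝ) → E} {vol : ι →ᵇᵃ E →L[ℝ] F} {y : F}
    (hf : HasIntegral B IntegrationParams.Riemann f vol y) :
    Tendsto (fun n : ℕ ↦ integralSum f vol (prepartition (n + 1) B)) atTop (𝓝 y) := by
  rw [Metric.nhds_basis_closedBall.tendsto_right_iff]
  intro ε hε
  obtain ⟨r, hr_const, hr⟩ := hasIntegral_iff.mp hf ε hε
  have hr_eq : r 0 = fun _ ↦ r 0 0 := funext (hr_const 0 rfl)
  have mesh_le : ∀ᶠ n : ℕ in atTop, 1 / ((n : ℝ) + 1) < r 0 0 :=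
    tendsto_one_div_add_atTop_nhds_zero_nat.eventually_lt_const (r 0 0).2
  filter_upwards [mesh_le] with n hn
  refine hr 0 _ ⟨?_, fun _ ↦ prepartition_isHenstock _ B, nofun, nofun⟩
    (prepartition_isPartition _ hB)
  rw [hr_eq]
  exact prepartition_isSubordinate _ B (r 0 0).2 (by exact_mod_cast hn.le)

/-- Unlike in `tendsto_tsum_div_pow_atTop_integral`, `F` need not be continuous on the frontier. -/
theorem tendsto_tsum_div_pow_atTop_setIntegral {ι : Type*} [Fintype ι] {s : Set (ι → ℝ)}
    {F : (ι → ℝ) → ℝ} (hs : Bornology.IsBounded s) (hs_frontier : volume (frontier s) = 0)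
    (hF : ContinuousOn F (interior s)) (hF_bdd : ∃ C, ∀ x ∈ s, ‖F x‖ ≤ C) :
    Tendsto (fun n : ℕ ↦ (∑' x : ↑(s ∩ (n : ℝ)⁻¹ • (Submodule.span ℤ
        (range (Pi.basisFun ℝ ι)) : Set (ι → ℝ))), F x) / (n : ℝ) ^ Fintype.card ι)
      atTop (𝓝 (∫ x in s, F x)) := by
  obtain ⟨B, hB, hsB⟩ := le_hasIntegralVertices_of_isBounded hs
  obtain ⟨C, hC⟩ := hF_bdd
  have indicator_bdd : ∀ x ∈ Box.Icc B, ‖s.indicator F x‖ ≤ max C 0 := fun x _ ↦ by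
    by_cases hx : x ∈ s
    · simpa [hx] using Or.inl (hC x hx)
    · simp [hx]
  have indicator_cont : ∀ᵐ x, ContinuousAt (s.indicator F) x := by
    filter_upwards [measure_eq_zero_iff_ae_notMem.mp hs_frontier] with x hx
    exact hF.continuousAt_indicator hx
  have hs_meas : NullMeasurableSet s volume := nullMeasurableSet_of_null_frontier hs_frontier
  have hasIntegral := AEContinuous.hasBoxIntegral volume ⟨_, indicator_bdd⟩ indicator_cont
    IntegrationParams.Riemann
  rw [integral_indicator₀ (hs_meas.mono Measure.restrict_le_self),
    Measure.restrict_restrict_of_subset hsB] at hasIntegral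
  rw [← tendsto_add_atTop_iff_nat 1]
  simpa only [integralSum_eq_tsum_div _ s F hB hsB] using
    tendsto_integralSum_unitPartition hB hasIntegral

end RiemannSums

/-! ### The unit quarter disk -/

/-- The closed unit quarter disk without the origin, the continuous counterpart of `quarterDisk`.
It lives in `Fin 2 → ℝ`, where the Riemann sums over lattice points do. -/
def unitQuarterDisk : Set (Fin 2 → ℝ) :=
  {x | 0 ≤ x 0 ∧ 0 ≤ x 1 ∧ 0 < x 0 ^ 2 + x 1 ^ 2 ∧ x 0 ^ 2 + x 1 ^ 2 ≤ 1}

theorem isBounded_unitQuarterDisk : Bornology.IsBounded unitQuarterDisk := by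
  refine (Metric.isBounded_Icc (0 : Fin 2 → ℝ) 1).subset fun x ⟨h0, h1, _, h⟩ ↦ ?_
  simp only [mem_Icc, Pi.le_def, Fin.forall_fin_two, Pi.zero_apply, Pi.one_apply]
  exact ⟨⟨h0, h1⟩, by nlinarith, by nlinarith⟩

theorem convex_unitQuarterDisk : Convex ℝ unitQuarterDisk := by
  have sq_sum_pos_iff {a b : ℝ} (ha : 0 ≤ a) (hb : 0 ≤ b) : 0 < a ^ 2 + b ^ 2 ↔ 0 < a + b := by
    constructor <;> intro h
    · by_contra!
      nlinarith
    · nlinarith [pow_pos h 2, sq_nonneg (a - b)]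
  rintro x ⟨hx0, hx1, hx_pos, hx⟩ y ⟨hy0, hy1, hy_pos, hy⟩ a b ha hb hab
  rw [sq_sum_pos_iff hx0 hx1] at hx_pos
  rw [sq_sum_pos_iff hy0 hy1] at hy_pos
  have h0 : 0 ≤ a * x 0 + b * y 0 := by positivity
  have h1 : 0 ≤ a * x 1 + b * y 1 := by positivity
  refine ⟨h0, h1, (sq_sum_pos_iff h0 h1).mpr ?_, ?_⟩
  · calc 0 < a • (x 0 + x 1) + b • (y 0 + y 1) := convex_Ioi (0 : ℝ) hx_pos hy_pos ha hb hab
      _ = a * x 0 + b * y 0 + (a * x 1 + b * y 1) := by simp only [smul_eq_mul]; ring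
  · have sq_convex := (even_two.convexOn_pow (𝕜 := ℝ)).2
    calc (a * x 0 + b * y 0) ^ 2 + (a * x 1 + b * y 1) ^ 2
        ≤ (a * x 0 ^ 2 + b * y 0 ^ 2) + (a * x 1 ^ 2 + b * y 1 ^ 2) :=
          add_le_add (sq_convex (mem_univ _) (mem_univ _) ha hb hab)
            (sq_convex (mem_univ _) (mem_univ _) ha hb hab)
      _ = a * (x 0 ^ 2 + x 1 ^ 2) + b * (y 0 ^ 2 + y 1 ^ 2) := by ring
      _ ≤ a * 1 + b * 1 := by gcongr
      _ = 1 := by rw [mul_one, mul_one, hab]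

theorem pos_of_mem_interior_unitQuarterDisk {x : Fin 2 → ℝ} (hx : x ∈ interior unitQuarterDisk)
    (i : Fin 2) : 0 < x i := by
  have hsub : unitQuarterDisk ⊆ Function.eval i ⁻¹' Ici 0 := fun y ⟨h0, h1, _⟩ ↦ by
    fin_cases i <;> assumption
  have := interior_mono hsub hx
  rwa [← (isOpenMap_eval i).preimage_interior_eq_interior_preimage (continuous_apply i),
    interior_Ici] at this

theorem arg_mem_Icc_of_nonneg {z : ℂ} (hre : 0 ≤ z.re) (him : 0 ≤ z.im) :
    z.arg ∈ Icc 0 (π / 2) :=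
  ⟨Complex.arg_nonneg_iff.mpr him, Complex.arg_le_pi_div_two_iff.mpr (Or.inl hre)⟩

theorem mem_Icc_zero_pi_div_two_iff {θ : ℝ} (hθ : θ ∈ Ioo (-π) π) :
    θ ∈ Icc 0 (π / 2) ↔ 0 ≤ Real.cos θ ∧ 0 ≤ Real.sin θ := by
  refine ⟨fun h ↦ ⟨Real.cos_nonneg_of_mem_Icc ⟨by linarith [h.1, Real.pi_pos], h.2⟩,
    Real.sin_nonneg_of_nonneg_of_le_pi h.1 hθ.2.le⟩, fun ⟨hcos, hsin⟩ ↦ ⟨?_, ?_⟩⟩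
  · by_contra! h
    exact (Real.sin_neg_of_neg_of_neg_pi_lt h hθ.1).not_ge hsin
  · by_contra! h
    exact (Real.cos_neg_of_pi_div_two_lt_of_lt h (by linarith [hθ.2, Real.pi_pos])).not_ge hcos

theorem measurableEquivPi_polarCoord_symm_mem_unitQuarterDisk_iff {p : ℝ × ℝ}
    (hp : p ∈ polarCoord.target) :
    Complex.measurableEquivPi (Complex.polarCoord.symm p) ∈ unitQuarterDisk ↔
      p ∈ Ioc 0 1 ×ˢ Icc 0 (π / 2) := by
  obtain ⟨hr : 0 < p.1, hθ : p.2 ∈ Ioo (-π) π⟩ := hp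
  have sq_sum : (p.1 * Real.cos p.2) ^ 2 + (p.1 * Real.sin p.2) ^ 2 = p.1 ^ 2 := by
    rw [mul_pow, mul_pow, ← mul_add, Real.cos_sq_add_sin_sq, mul_one]
  have coords : Complex.measurableEquivPi (Complex.polarCoord.symm p) =
      ![p.1 * Real.cos p.2, p.1 * Real.sin p.2] := by
    rw [Complex.measurableEquivPi_apply, Complex.polarCoord_symm_apply]
    simp [-Complex.ofReal_cos, -Complex.ofReal_sin]
  rw [coords, mem_prod, mem_Icc_zero_pi_div_two_iff hθ]
  simp only [unitQuarterDisk, mem_ofPred_eq, Matrix.cons_val_zero, Matrix.cons_val_one, sq_sum,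
    mul_nonneg_iff_of_pos_left hr, pow_pos hr, sq_le_one_iff₀ hr.le, mem_Ioc, hr, true_and]
  tauto

theorem setIntegral_unitQuarterDisk_comp_arg (g : ℝ → ℝ) :
    ∫ x in unitQuarterDisk, g (Complex.measurableEquivPi.symm x).arg =
      1 / 2 * ∫ θ in 0..π / 2, g θ := by
  let G : (Fin 2 → ℝ) → ℝ := fun x ↦ g (Complex.measurableEquivPi.symm x).arg
  have polar_indicator : ∀ p ∈ polarCoord.target,
      p.1 • unitQuarterDisk.indicator G (Complex.measurableEquivPi (Complex.polarCoord.symm p)) =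
        (Ioc 0 1 ×ˢ Icc 0 (π / 2)).indicator (fun p : ℝ × ℝ ↦ p.1 * g p.2) p := by
    intro p hp
    have hmem := measurableEquivPi_polarCoord_symm_mem_unitQuarterDisk_iff hp
    by_cases h : p ∈ Ioc (0 : ℝ) 1 ×ˢ Icc 0 (π / 2)
    · have arg_eq : (Complex.polarCoord.symm p).arg = p.2 := by
        rw [Complex.polarCoord_symm_apply, Complex.ofReal_cos, Complex.ofReal_sin]
        exact Complex.arg_mul_cos_add_sin_mul_I hp.1 (Ioo_subset_Ioc_self hp.2)
      rw [indicator_of_mem h, indicator_of_mem (hmem.mpr h), smul_eq_mul]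
      simp only [G, MeasurableEquiv.symm_apply_apply, arg_eq]
    · rw [indicator_of_notMem h, indicator_of_notMem (mt hmem.mp h), smul_zero]
  have hsub : Ioc (0 : ℝ) 1 ×ˢ Icc 0 (π / 2) ⊆ polarCoord.target :=
    prod_mono (fun _ h ↦ h.1) fun _ h ↦
      ⟨by linarith [h.1, Real.pi_pos], by linarith [h.2, Real.pi_pos]⟩
  calc ∫ x in unitQuarterDisk, G x
      = ∫ x, unitQuarterDisk.indicator G x :=
        (integral_indicator₀ (convex_unitQuarterDisk.nullMeasurableSet _)).symm
    _ = ∫ z, unitQuarterDisk.indicator G (Complex.measurableEquivPi z) :=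
        (Complex.volume_preserving_equiv_pi.integral_comp' _).symm
    _ = ∫ p in polarCoord.target, p.1 •
          unitQuarterDisk.indicator G (Complex.measurableEquivPi (Complex.polarCoord.symm p)) :=
        (Complex.integral_comp_polarCoord_symm _).symm
    _ = ∫ p in Ioc 0 1 ×ˢ Icc 0 (π / 2), p.1 * g p.2 := by
        rw [setIntegral_congr_fun polarCoord.open_target.measurableSet polar_indicator,
          setIntegral_indicator (measurableSet_Ioc.prod measurableSet_Icc),
          inter_eq_self_of_subset_right hsub]
    _ = (∫ r in Ioc (0 : ℝ) 1, r) * ∫ θ in Icc 0 (π / 2), g θ :=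
        setIntegral_prod_mul (fun r ↦ r) g _ _
    _ = 1 / 2 * ∫ θ in 0..π / 2, g θ := by
        rw [integral_Icc_eq_integral_Ioc, ← intervalIntegral.integral_of_le zero_le_one,
          ← intervalIntegral.integral_of_le (by positivity), integral_id]
        norm_num

/-! ### Lattice points of the quarter disk -/

theorem mem_quarterDisk {n : ℕ} {l : ℕ × ℕ} :
    l ∈ quarterDisk n ↔ 0 < l.1 ^ 2 + l.2 ^ 2 ∧ l.1 ^ 2 + l.2 ^ 2 ≤ n ^ 2 := by
  simp only [quarterDisk, Finset.mem_filter, Finset.mem_product, Finset.mem_range,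
    and_iff_right_iff_imp]
  rintro ⟨-, h⟩
  constructor <;> nlinarith

theorem lamAngle_eq_arg {l : ℕ × ℕ} (hl : 0 < l.1 ^ 2 + l.2 ^ 2) :
    lamAngle l = Complex.arg (l.1 + l.2 * Complex.I) := by
  rw [lamAngle]
  split_ifs with h
  · have hl2 : (0 : ℝ) < l.2 := by
      rw [Nat.cast_pos, pos_iff_ne_zero]
      intro h'
      simp [h, h'] at hl
    rw [h, Nat.cast_zero, zero_add, ← Complex.ofReal_natCast, Complex.arg_real_mul _ hl2,
      Complex.arg_I]
  · set z : ℂ := l.1 + l.2 * Complex.I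
    have hre : z.re = l.1 := by simp [z]
    have him : z.im = l.2 := by simp [z]
    have hre_pos : 0 < z.re := by rw [hre]; positivity
    have harg := abs_lt.mp (Complex.abs_arg_lt_pi_div_two_iff.mpr (Or.inl hre_pos))
    rw [← hre, ← him, ← Complex.tan_arg, Real.arctan_tan harg.1 harg.2]

/-- The point `l / n` of the plane, at which the `n`-th Riemann sum over `unitQuarterDisk` is
evaluated when `l` runs through `quarterDisk n`. -/
noncomputable def scaledPoint (n : ℕ) (l : ℕ × ℕ) : Fin 2 → ℝ := ![l.1 / n, l.2 / n]

theorem scaledPoint_injective {n : ℕ} (hn : n ≠ 0) : Function.Injective (scaledPoint n) := by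
  intro l m h
  have h0 := congrFun h 0
  have h1 := congrFun h 1
  simp only [scaledPoint, Matrix.cons_val_zero, Matrix.cons_val_one] at h0 h1
  field_simp at h0 h1
  exact Prod.ext (mod_cast h0) (mod_cast h1)

theorem scaledPoint_mem_unitQuarterDisk_iff {n : ℕ} (hn : n ≠ 0) {l : ℕ × ℕ} :
    scaledPoint n l ∈ unitQuarterDisk ↔ l ∈ quarterDisk n := by
  have hn_sq : (0 : ℝ) < (n : ℝ) ^ 2 := by positivity
  have h0 : (0 : ℝ) ≤ l.1 / n := by positivity
  have h1 : (0 : ℝ) ≤ l.2 / n := by positivity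
  simp only [unitQuarterDisk, scaledPoint, mem_ofPred_eq, Matrix.cons_val_zero,
    Matrix.cons_val_one, h0, h1, true_and, mem_quarterDisk, div_pow, ← add_div,
    div_pos_iff_of_pos_right hn_sq, div_le_one hn_sq]
  norm_cast

theorem arg_scaledPoint {n : ℕ} (hn : n ≠ 0) {l : ℕ × ℕ} (hl : 0 < l.1 ^ 2 + l.2 ^ 2) :
    (Complex.measurableEquivPi.symm (scaledPoint n l)).arg = lamAngle l := by
  have hn_inv : (0 : ℝ) < (n : ℝ)⁻¹ := by positivity
  rw [lamAngle_eq_arg hl, ← Complex.arg_real_mul (l.1 + l.2 * Complex.I) hn_inv,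
    Complex.measurableEquivPi_symm_apply]
  congr 1
  simp only [scaledPoint, Matrix.cons_val_zero, Matrix.cons_val_one]
  push_cast
  ring

theorem exists_scaledPoint_eq_iff {n : ℕ} [NeZero n] {x : Fin 2 → ℝ} (hx0 : 0 ≤ x 0)
    (hx1 : 0 ≤ x 1) :
    (∃ l, scaledPoint n l = x) ↔
      x ∈ (n : ℝ)⁻¹ • (Submodule.span ℤ (range (Pi.basisFun ℝ (Fin 2))) : Set (Fin 2 → ℝ)) := by
  have hn : (n : ℝ) ≠ 0 := NeZero.ne _
  rw [← Submodule.coe_pointwise_smul, SetLike.mem_coe,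
    BoxIntegral.unitPartition.mem_smul_span_iff]
  constructor
  · rintro ⟨l, rfl⟩
    simp only [Fin.forall_fin_two, scaledPoint, Matrix.cons_val_zero, Matrix.cons_val_one,
      mul_div_cancel₀ _ hn]
    exact ⟨⟨l.1, by simp⟩, ⟨l.2, by simp⟩⟩
  · have exists_nat {t : ℝ} (ht : 0 ≤ t) (h : n * t ∈ range (algebraMap ℤ ℝ)) :
        ∃ a : ℕ, (a : ℝ) / n = t := by
      obtain ⟨a, ha⟩ := h
      rw [algebraMap_int_eq, eq_intCast] at ha
      have ha_nonneg : 0 ≤ a := by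
        have : (0 : ℝ) ≤ a := ha ▸ by positivity
        exact_mod_cast this
      lift a to ℕ using ha_nonneg
      exact ⟨a, by rw [div_eq_iff hn, mul_comm, ← ha, Int.cast_natCast]⟩
    intro h
    obtain ⟨a, ha⟩ := exists_nat hx0 (h 0)
    obtain ⟨b, hb⟩ := exists_nat hx1 (h 1)
    exact ⟨(a, b), funext (Fin.forall_fin_two.mpr ⟨ha, hb⟩)⟩

theorem unitQuarterDisk_inter_smul_span_eq_image {n : ℕ} (hn : n ≠ 0) :
    unitQuarterDisk ∩ (n : ℝ)⁻¹ • (Submodule.span ℤ (range (Pi.basisFun ℝ (Fin 2))) :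
      Set (Fin 2 → ℝ)) = scaledPoint n '' quarterDisk n := by
  have : NeZero n := ⟨hn⟩
  ext x
  constructor
  · rintro ⟨hx, hx_span⟩
    obtain ⟨l, rfl⟩ := (exists_scaledPoint_eq_iff hx.1 hx.2.1).mpr hx_span
    exact mem_image_of_mem _ ((scaledPoint_mem_unitQuarterDisk_iff hn).mp hx)
  · rintro ⟨l, hl, rfl⟩
    have hx := (scaledPoint_mem_unitQuarterDisk_iff hn).mpr hl
    exact ⟨hx, (exists_scaledPoint_eq_iff hx.1 hx.2.1).mp ⟨l, rfl⟩⟩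

theorem tsum_unitQuarterDisk_inter_smul_span {n : ℕ} (hn : n ≠ 0) (F : (Fin 2 → ℝ) → ℝ) :
    ∑' x : ↑(unitQuarterDisk ∩ (n : ℝ)⁻¹ • (Submodule.span ℤ
      (range (Pi.basisFun ℝ (Fin 2))) : Set (Fin 2 → ℝ))), F x =
      ∑ l ∈ quarterDisk n, F (scaledPoint n l) := by
  rw [unitQuarterDisk_inter_smul_span_eq_image hn,
    tsum_image F (scaledPoint_injective hn).injOn]
  exact Finset.tsum_subtype (quarterDisk n) fun l ↦ F (scaledPoint n l)

/-! ### Equidistribution of the angles -/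

theorem tendsto_sum_lamAngle_div_sq {g : ℝ → ℝ} (hg : ContinuousOn g (Icc 0 (π / 2))) :
    Tendsto (fun R : ℕ ↦ (∑ l ∈ quarterDisk R, g (lamAngle l)) / (R : ℝ) ^ 2) atTop
      (𝓝 (1 / 2 * ∫ θ in 0..π / 2, g θ)) := by
  let arg : (Fin 2 → ℝ) → ℝ := fun x ↦ (Complex.measurableEquivPi.symm x).arg
  have arg_mem : ∀ x ∈ unitQuarterDisk, arg x ∈ Icc 0 (π / 2) := fun x hx ↦
    arg_mem_Icc_of_nonneg (by simpa using hx.1) (by simpa using hx.2.1)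
  have toComplex_cont : Continuous Complex.measurableEquivPi.symm := by
    change Continuous fun x : Fin 2 → ℝ ↦ (x 0 : ℂ) + x 1 * Complex.I
    fun_prop
  have arg_cont : ContinuousOn arg (interior unitQuarterDisk) := fun x hx ↦ by
    have hx0 := pos_of_mem_interior_unitQuarterDisk hx 0
    exact (Complex.continuousAt_arg (Or.inl (by simpa using hx0))).comp_continuousWithinAt
      toComplex_cont.continuousWithinAt
  have bdd : ∃ C, ∀ x ∈ unitQuarterDisk, ‖g (arg x)‖ ≤ C :=
    (isCompact_Icc.exists_bound_of_continuousOn hg).imp fun C hC x hx ↦ hC _ (arg_mem x hx)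
  have riemann_sums := tendsto_tsum_div_pow_atTop_setIntegral isBounded_unitQuarterDisk
    (convex_unitQuarterDisk.addHaar_frontier _)
    (hg.comp arg_cont fun x hx ↦ arg_mem x (interior_subset hx)) bdd
  rw [← setIntegral_unitQuarterDisk_comp_arg]
  refine riemann_sums.congr' ?_
  filter_upwards [eventually_ne_atTop 0] with n hn
  rw [tsum_unitQuarterDisk_inter_smul_span hn, Fintype.card_fin]
  congr 1
  exact Finset.sum_congr rfl fun l hl ↦
    congrArg g (arg_scaledPoint hn (mem_quarterDisk.mp hl).1)

theorem tendsto_card_quarterDisk_div_sq :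
    Tendsto (fun R : ℕ ↦ ((quarterDisk R).card : ℝ) / (R : ℝ) ^ 2) atTop (𝓝 (π / 4)) := by
  have h := tendsto_sum_lamAngle_div_sq (continuousOn_const (c := (1 : ℝ)))
  simp only [Finset.sum_const, nsmul_eq_mul, mul_one, intervalIntegral.integral_const, sub_zero,
    smul_eq_mul] at h
  convert h using 2
  ring

theorem tendsto_average_lamAngle {g : ℝ → ℝ} (hg : ContinuousOn g (Icc 0 (π / 2))) :
    Tendsto (fun R : ℕ ↦ 1 / ((quarterDisk R).card : ℝ) * ∑ l ∈ quarterDisk R, g (lamAngle l))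
      atTop (𝓝 (2 / π * ∫ θ in 0..π / 2, g θ)) := by
  have h := (tendsto_sum_lamAngle_div_sq hg).div tendsto_card_quarterDisk_div_sq (by positivity)
  have limit_eq : (1 / 2 * ∫ θ in 0..π / 2, g θ) / (π / 4) = 2 / π * ∫ θ in 0..π / 2, g θ := by
    field_simp
    ring
  rw [limit_eq] at h
  refine h.congr' ?_
  filter_upwards [eventually_ne_atTop 0] with R hR
  rw [Pi.div_apply, div_div_div_cancel_right₀ (by positivity), one_div_mul_eq_div]

theorem integral_cos_two_mul_nat_mul {m : ℕ} (hm : m ≠ 0) :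
    ∫ θ in 0..π / 2, Real.cos (2 * m * θ) = 0 := by
  rw [intervalIntegral.integral_comp_mul_left _ (by positivity), integral_cos, mul_zero,
    Real.sin_zero, mul_right_comm, mul_div_cancel₀ _ two_ne_zero, mul_comm π, Real.sin_nat_mul_pi,
    sub_zero, smul_zero]

theorem average_angle_function_vanishes (κ : ℝ) :
    Filter.Tendsto
      (fun R : ℕ => (1 / ((quarterDisk R).card : ℝ)) *
        ∑ l ∈ quarterDisk R,
          (4 * Real.cos (2 * lamAngle l) * Real.cos (2 * κ) -
            Real.cos (4 * lamAngle l) * Real.cos (4 * κ)))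
      Filter.atTop (nhds 0) := by
  have cos_two : ∫ θ in 0..π / 2, Real.cos (2 * θ) = 0 := by
    simpa using integral_cos_two_mul_nat_mul one_ne_zero
  have cos_four : ∫ θ in 0..π / 2, Real.cos (4 * θ) = 0 := by
    convert integral_cos_two_mul_nat_mul two_ne_zero using 4
    norm_num
  have integral_eq_zero : ∫ θ in 0..π / 2, (4 * Real.cos (2 * θ) * Real.cos (2 * κ) -
      Real.cos (4 * θ) * Real.cos (4 * κ)) = 0 := by
    rw [intervalIntegral.integral_sub (Continuous.intervalIntegrable (by fun_prop) _ _)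
        (Continuous.intervalIntegrable (by fun_prop) _ _),
      intervalIntegral.integral_mul_const, intervalIntegral.integral_mul_const,
      intervalIntegral.integral_const_mul, cos_two, cos_four]
    ring
  have equidistribution := tendsto_average_lamAngle
    (g := fun θ ↦ 4 * Real.cos (2 * θ) * Real.cos (2 * κ) - Real.cos (4 * θ) * Real.cos (4 * κ))
    (by fun_prop)
  rwa [integral_eq_zero, mul_zero] at equidistribution
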